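/- arXiv:1511.04761 — 2 statements merged into one kernel-verified Lean document; each statement's English description precedes it below -/
import Mathlib

section
/- A non-empty subset Q of l_∞(I) is injective (as a metric space with the induced metric) if and only if there exist subsets L, U of I and, for each i ∈ L, a 1-Lipschitz function r̲_i : l_∞(I∖{i}) → ℝ, and for each i ∈ U, a 1-Lipschitz function r̄_i : l_∞(I∖{i}) → ℝ, with r̲_i(y) ≤ r̄_i(y) for all y whenever i ∈ L ∩ U, such that Q = { x ∈ l_∞(I) : r̲_i(π̂_i(x)) ≤ x_i for all i ∈ L, and x_i ≤ r̄_i(π̂_i(x)) for all i ∈ U }. -/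
universe u v w

/-- A metric space `X` is injective if for every pair of metric spaces `A`, `B`, every
isometric embedding `ι : A → B` and every `1`-Lipschitz map `f : A → X`, there is a
`1`-Lipschitz map `g : B → X` with `g ∘ ι = f`. -/
def IsInjectiveMetricSpace (X : Type u) [MetricSpace X] : Prop :=
  ∀ ⦃A : Type v⦄ ⦃B : Type w⦄ [MetricSpace A] [MetricSpace B],
    ∀ ι : A → B, Isometry ι → ∀ f : A → X, LipschitzWith 1 f →
      ∃ g : B → X, LipschitzWith 1 g ∧ ∀ a, g (ι a) = f a

/-- The map `l_∞(I) → l_∞(I \ {i})` dropping the `i`-th coordinate. -/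
noncomputable def dropCoord {I : Type u} (i : I) (x : lp (fun _ : I => ℝ) ⊤) :
    lp (fun _ : {j : I // j ≠ i} => ℝ) ⊤ :=
  ⟨fun j => x j.1, memℓp_infty ⟨‖x‖, by
    rintro s ⟨j, rfl⟩
    exact lp.norm_apply_le_norm ENNReal.top_ne_zero x j.1⟩⟩

/-! Both conditions describe the nonempty fixed-point sets of `1`-Lipschitz self-maps of `l_∞(I)`.

An injective subset is the fixed-point set of a `1`-Lipschitz retraction `ρ`. Fixing all coordinates
but the `i`-th, the values that `ρ` leaves alone in the `i`-th coordinate form a closed interval,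
which moves by at most `dist y z` when the other coordinates move from `y` to `z`; its endpoints
are the functions `r̲_i` and `r̄_i`. Conversely, clamping every coordinate between its bounds is a
`1`-Lipschitz map whose fixed-point set is the set cut out by the constraints.

That fixed-point sets are injective is Baillon's theorem: in a hyperconvex space, a family of
pairwise compatible balls centred at fixed points of `T` has a `T`-invariant intersection, and a
minimal `T`-invariant intersection of balls is a single point, as otherwise the points within half
its diameter from all the others would form a smaller one. -/

open Set Function Metric

section Hyperconvex

/-- Hyperconvexity (Aronszajn–Panitchpakdi): closed balls `closedBall p.1 p.2` that are pairwise
compatible, in the sense that the distance of any two centres is at most the sum of the radii, have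
a common point. The empty family is included, so a hyperconvex space is nonempty. -/
def IsHyperconvex (X : Type*) [PseudoMetricSpace X] : Prop :=
  ∀ S : Set (X × ℝ), (∀ p ∈ S, ∀ q ∈ S, dist p.1 q.1 ≤ p.2 + q.2) → ∃ z, ∀ p ∈ S, dist z p.1 ≤ p.2

theorem IsHyperconvex.exists_forall_dist_le {X : Type*} [PseudoMetricSpace X]
    (hX : IsHyperconvex X) {ι : Sort*} (c : ι → X) (r : ι → ℝ)
    (h : ∀ i j, dist (c i) (c j) ≤ r i + r j) : ∃ z, ∀ i, dist z (c i) ≤ r i := by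
  simpa only [forall_mem_range] using
    hX (range fun i ↦ (c i, r i)) (by simpa only [forall_mem_range] using h)

theorem isHyperconvex_real : IsHyperconvex ℝ := by
  intro S hS
  rcases S.eq_empty_or_nonempty with rfl | hne
  · simp
  obtain ⟨z, hlower, hupper⟩ := exists_between_of_forall_le
    (hne.image fun p ↦ p.1 - p.2) (hne.image fun p ↦ p.1 + p.2) (by
      rintro _ ⟨p, hp, rfl⟩ _ ⟨q, hq, rfl⟩
      linarith [(abs_le.1 (hS p hp q hq)).2])
  refine ⟨z, fun p hp ↦ abs_sub_le_iff.2 ⟨?_, ?_⟩⟩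
  · linarith [hupper (mem_image_of_mem _ hp)]
  · linarith [hlower (mem_image_of_mem _ hp)]

open scoped ENNReal lp in
theorem isHyperconvex_linf (I : Type*) : IsHyperconvex ℓ^∞(I, ℝ) := by
  intro S hS
  rcases S.eq_empty_or_nonempty with rfl | ⟨p₀, hp₀⟩
  · simp
  have hcoord (i : I) : ∃ t : ℝ, ∀ p : S, dist t (p.1.1 i) ≤ p.1.2 :=
    isHyperconvex_real.exists_forall_dist_le _ _ fun p q ↦
      ((lp.lipschitzWith_one_eval ∞ i).dist_le_mul p.1.1 q.1.1).trans
        (by simpa using hS p p.2 q q.2)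
  choose z hz using hcoord
  have hsub : Memℓp (fun i ↦ z i - p₀.1 i) ∞ :=
    memℓp_infty ⟨p₀.2, forall_mem_range.2 fun i ↦ hz i ⟨p₀, hp₀⟩⟩
  have hmem : Memℓp z ∞ := by simpa [Pi.add_def] using hsub.add (lp.memℓp p₀.1)
  refine ⟨⟨z, hmem⟩, fun p hp ↦ ?_⟩
  rw [dist_eq_norm]
  exact lp.norm_le_of_forall_le (nonneg_add_self_iff.1 (dist_nonneg.trans (hS p hp p hp)))
    fun i ↦ hz i ⟨p, hp⟩

end Hyperconvex

section Extension

variable {X B : Type*}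

/-- `G` is the graph of a partially defined `1`-Lipschitz map `B → X`. -/
def IsNonexpansiveGraph [PseudoMetricSpace X] [PseudoMetricSpace B] (G : Set (B × X)) : Prop :=
  ∀ p ∈ G, ∀ q ∈ G, dist p.2 q.2 ≤ dist p.1 q.1

theorem IsHyperconvex.exists_isNonexpansiveGraph_insert [PseudoMetricSpace X]
    [PseudoMetricSpace B] (hX : IsHyperconvex X) {G : Set (B × X)} (hG : IsNonexpansiveGraph G)
    (b : B) : ∃ x, IsNonexpansiveGraph (insert (b, x) G) := by
  obtain ⟨x, hx⟩ := hX.exists_forall_dist_le (fun p : G ↦ p.1.2) (fun p ↦ dist b p.1.1)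
    fun p q ↦ (hG p p.2 q q.2).trans (dist_triangle_left _ _ _)
  refine ⟨x, ?_⟩
  rintro p (rfl | hp) q (rfl | hq)
  · simp
  · exact hx ⟨q, hq⟩
  · simpa only [dist_comm] using hx ⟨p, hp⟩
  · exact hG p hp q hq

theorem exists_maximal_isNonexpansiveGraph [PseudoMetricSpace X] [PseudoMetricSpace B]
    {G₀ : Set (B × X)} (hG₀ : IsNonexpansiveGraph G₀) :
    ∃ G, G₀ ⊆ G ∧ Maximal IsNonexpansiveGraph G := by
  refine zorn_subset_nonempty {G : Set (B × X) | IsNonexpansiveGraph G}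
    (fun c hc hchain _ ↦ ⟨⋃₀ c, ?_, fun _ ↦ subset_sUnion_of_mem⟩) G₀ hG₀
  rintro p ⟨G, hG, hpG⟩ q ⟨G', hG', hqG'⟩
  rcases hchain.total hG hG' with hle | hle
  · exact hc hG' p (hle hpG) q hqG'
  · exact hc hG p hpG q (hle hqG')

theorem IsHyperconvex.isInjectiveMetricSpace [MetricSpace X] (hX : IsHyperconvex X) :
    IsInjectiveMetricSpace X := by
  intro A B _ _ ι hι f hf
  have hgraph : IsNonexpansiveGraph (range fun a ↦ (ι a, f a)) := by
    rintro _ ⟨a, rfl⟩ _ ⟨a', rfl⟩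
    simpa [hι.dist_eq] using hf.dist_le_mul a a'
  obtain ⟨G, hfG, hG⟩ := exists_maximal_isNonexpansiveGraph hgraph
  have htotal (b : B) : ∃ x, (b, x) ∈ G := by
    obtain ⟨x, hx⟩ := hX.exists_isNonexpansiveGraph_insert hG.prop b
    exact ⟨x, hG.le_of_ge hx (subset_insert _ _) (mem_insert _ _)⟩
  choose g hg using htotal
  refine ⟨g, LipschitzWith.mk_one fun b b' ↦ hG.prop _ (hg b) _ (hg b'), fun a ↦ ?_⟩
  simpa using hG.prop _ (hg (ι a)) _ (hfG ⟨a, rfl⟩)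

theorem IsInjectiveMetricSpace.exists_lipschitzWith_fixedPoints_eq {X : Type u} [MetricSpace X]
    {Q : Set X} (hQ : IsInjectiveMetricSpace.{u, u, u} Q) :
    ∃ ρ : X → X, LipschitzWith 1 ρ ∧ fixedPoints ρ = Q := by
  obtain ⟨ρ, hρ, hid⟩ := hQ Subtype.val isometry_subtype_coe id LipschitzWith.id
  refine ⟨fun x ↦ ρ x, hρ, Subset.antisymm (fun x hx ↦ ?_) fun x hx ↦ ?_⟩
  · exact mem_of_eq_of_mem hx.symm (ρ x).2
  · exact congrArg Subtype.val (hid ⟨x, hx⟩)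

end Extension

section Admissible

variable {X : Type*} [PseudoMetricSpace X] {A A' : Set X}

/-- The ball hull of `A`: the intersection of all closed balls containing `A`. -/
def ballHull (A : Set X) : Set X :=
  {x | ∀ c r, A ⊆ closedBall c r → x ∈ closedBall c r}

/-- Admissible sets are the intersections of closed balls, encoded as the sets containing their
ball hull. -/
def IsAdmissible (A : Set X) : Prop :=
  ballHull A ⊆ A

theorem subset_ballHull (A : Set X) : A ⊆ ballHull A :=
  fun _ hx _ _ hA ↦ hA hx

theorem ballHull_mono (h : A ⊆ A') : ballHull A ⊆ ballHull A' :=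
  fun _ hx c r hA' ↦ hx c r (h.trans hA')

theorem isAdmissible_ballHull (A : Set X) : IsAdmissible (ballHull A) :=
  fun _ hx c r hA ↦ hx c r fun _ hy ↦ hy c r hA

theorem isAdmissible_closedBall (c : X) (r : ℝ) : IsAdmissible (closedBall c r) :=
  fun _ hx ↦ hx c r Subset.rfl

theorem isAdmissible_iInter {ι : Sort*} {A : ι → Set X} (hA : ∀ i, IsAdmissible (A i)) :
    IsAdmissible (⋂ i, A i) :=
  subset_iInter fun i ↦ (ballHull_mono (iInter_subset A i)).trans (hA i)

theorem IsAdmissible.inter (hA : IsAdmissible A) (hA' : IsAdmissible A') :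
    IsAdmissible (A ∩ A') :=
  subset_inter ((ballHull_mono inter_subset_left).trans hA)
    ((ballHull_mono inter_subset_right).trans hA')

theorem isAdmissible_sInter {c : Set (Set X)} (hc : ∀ A ∈ c, IsAdmissible A) :
    IsAdmissible (⋂₀ c) :=
  subset_sInter fun A hA ↦ (ballHull_mono (sInter_subset_of_mem hA)).trans (hc A hA)

theorem IsHyperconvex.sInter_nonempty_of_isChain (hX : IsHyperconvex X) {c : Set (Set X)}
    (hchain : IsChain (· ⊆ ·) c) (hadm : ∀ A ∈ c, IsAdmissible A) (hne : ∀ A ∈ c, A.Nonempty) :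
    (⋂₀ c).Nonempty := by
  obtain ⟨z, hz⟩ := hX {p | ∃ A ∈ c, A ⊆ closedBall p.1 p.2} (by
    rintro p ⟨A, hA, hAp⟩ q ⟨A', hA', hAq⟩
    obtain ⟨x, hx, hx'⟩ : (A ∩ A').Nonempty := by
      rcases hchain.total hA hA' with hle | hle
      · simpa only [inter_eq_left.2 hle] using hne A hA
      · simpa only [inter_eq_right.2 hle] using hne A' hA'
    exact (dist_triangle_left _ _ x).trans (add_le_add (hAp hx) (hAq hx')))
  exact ⟨z, fun A hA ↦ hadm A hA fun c r hAc ↦ hz (c, r) ⟨A, hA, hAc⟩⟩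

/-- The points of `A` within distance `diam A / 2` from all points of `A`. -/
def halfDiamCenters (A : Set X) : Set X :=
  A ∩ ⋂ y ∈ A, closedBall y (diam A / 2)

theorem IsAdmissible.halfDiamCenters (hA : IsAdmissible A) : IsAdmissible (halfDiamCenters A) :=
  hA.inter (isAdmissible_iInter fun _ ↦ isAdmissible_iInter fun _ ↦ isAdmissible_closedBall _ _)

theorem IsHyperconvex.halfDiamCenters_nonempty (hX : IsHyperconvex X) (hA : IsAdmissible A)
    (hne : A.Nonempty) (hb : Bornology.IsBounded A) : (halfDiamCenters A).Nonempty := by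
  obtain ⟨a, ha⟩ := hne
  have hdiam : 0 ≤ diam A := diam_nonneg
  obtain ⟨z, hz⟩ := hX ({p | A ⊆ closedBall p.1 p.2} ∪ (fun y ↦ (y, diam A / 2)) '' A) (by
    rintro p (hp | ⟨y, hy, rfl⟩) q (hq | ⟨y', hy', rfl⟩)
    · exact (dist_triangle_left _ _ a).trans (add_le_add (hp ha) (hq ha))
    · linarith [mem_closedBall'.1 (hp hy')]
    · linarith [mem_closedBall.1 (hq hy)]
    · linarith [dist_le_diam_of_mem hb hy hy'])
  exact ⟨z, hA fun c r hAc ↦ hz (c, r) (.inl hAc),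
    mem_iInter₂.2 fun y hy ↦ hz _ (.inr (mem_image_of_mem _ hy))⟩

end Admissible

section Baillon

variable {X : Type*}

/-- The class of sets in which Baillon's theorem takes a minimal element: nonempty bounded
admissible sets that `T` maps into themselves. -/
structure IsInvariantAdmissible [PseudoMetricSpace X] (T : X → X) (A : Set X) : Prop where
  isAdmissible : IsAdmissible A
  nonempty : A.Nonempty
  isBounded : Bornology.IsBounded A
  mapsTo : MapsTo T A A

section Pseudo

variable [PseudoMetricSpace X] {T : X → X} {A : Set X}

theorem IsHyperconvex.exists_minimal_isInvariantAdmissible (hX : IsHyperconvex X)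
    (hA : IsInvariantAdmissible T A) : ∃ M ⊆ A, Minimal (IsInvariantAdmissible T) M := by
  refine zorn_superset_nonempty {A | IsInvariantAdmissible T A}
    (fun c hc hchain ⟨A', hA'⟩ ↦ ⟨⋂₀ c, ?_, fun _ ↦ sInter_subset_of_mem⟩) A hA
  exact
    { isAdmissible := isAdmissible_sInter fun _ h ↦ (hc h).isAdmissible
      nonempty := hX.sInter_nonempty_of_isChain hchain (fun _ h ↦ (hc h).isAdmissible)
        fun _ h ↦ (hc h).nonempty
      isBounded := (hc hA').isBounded.subset (sInter_subset_of_mem hA')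
      mapsTo := fun _ hx B hB ↦ (hc hB).mapsTo (hx B hB) }

theorem IsInvariantAdmissible.ballHull_image_subset (hA : IsInvariantAdmissible T A) :
    ballHull (T '' A) ⊆ A :=
  (ballHull_mono hA.mapsTo.image_subset).trans hA.isAdmissible

theorem IsInvariantAdmissible.ballHull_image (hA : IsInvariantAdmissible T A) :
    IsInvariantAdmissible T (ballHull (T '' A)) where
  isAdmissible := isAdmissible_ballHull _
  nonempty := (hA.nonempty.image T).mono (subset_ballHull _)
  isBounded := hA.isBounded.subset hA.ballHull_image_subset
  mapsTo _ hx := subset_ballHull _ (mem_image_of_mem T (hA.ballHull_image_subset hx))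

theorem subset_closedBall_of_minimal_isInvariantAdmissible
    (hA : Minimal (IsInvariantAdmissible T) A) {c : X} {r : ℝ} (h : T '' A ⊆ closedBall c r) :
    A ⊆ closedBall c r :=
  fun _ hx ↦ hA.le_of_le hA.prop.ballHull_image hA.prop.ballHull_image_subset hx c r h

theorem IsHyperconvex.isInvariantAdmissible_halfDiamCenters (hX : IsHyperconvex X)
    (hT : LipschitzOnWith 1 T A) (hA : Minimal (IsInvariantAdmissible T) A) :
    IsInvariantAdmissible T (halfDiamCenters A) where
  isAdmissible := hA.prop.isAdmissible.halfDiamCenters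
  nonempty := hX.halfDiamCenters_nonempty hA.prop.isAdmissible hA.prop.nonempty hA.prop.isBounded
  isBounded := hA.prop.isBounded.subset inter_subset_left
  mapsTo x hx := by
    have himage : T '' A ⊆ closedBall (T x) (diam A / 2) := by
      rintro _ ⟨y, hy, rfl⟩
      have hxy : dist y x ≤ diam A / 2 := mem_closedBall'.1 (mem_iInter₂.1 hx.2 y hy)
      exact (hT.dist_le_mul y hy x hx.1).trans (by simpa using hxy)
    exact ⟨hA.prop.mapsTo hx.1, mem_iInter₂.2 fun y hy ↦
      mem_closedBall'.2 (subset_closedBall_of_minimal_isInvariantAdmissible hA himage hy)⟩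

theorem IsHyperconvex.diam_eq_zero_of_minimal_isInvariantAdmissible (hX : IsHyperconvex X)
    (hT : LipschitzOnWith 1 T A) (hA : Minimal (IsInvariantAdmissible T) A) : diam A = 0 := by
  have hcenters : A ⊆ halfDiamCenters A :=
    hA.le_of_le (hX.isInvariantAdmissible_halfDiamCenters hT hA) inter_subset_left
  have hhalf : diam A ≤ diam A / 2 := diam_le_of_forall_dist_le (by positivity)
    fun x hx y hy ↦ mem_iInter₂.1 (hcenters hx).2 y hy
  linarith [diam_nonneg (s := A)]

end Pseudo

variable [MetricSpace X] {T : X → X} {A : Set X}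

theorem IsHyperconvex.exists_isFixedPt (hX : IsHyperconvex X) (hT : LipschitzOnWith 1 T A)
    (hA : IsInvariantAdmissible T A) : ∃ x ∈ A, IsFixedPt T x := by
  obtain ⟨M, hMA, hM⟩ := hX.exists_minimal_isInvariantAdmissible hA
  obtain ⟨x, hx⟩ := hM.prop.nonempty
  have hdiam := hX.diam_eq_zero_of_minimal_isInvariantAdmissible (hT.mono hMA) hM
  refine ⟨x, hMA hx, dist_le_zero.1 ?_⟩
  simpa only [hdiam] using dist_le_diam_of_mem hM.prop.isBounded (hM.prop.mapsTo hx) hx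

theorem IsHyperconvex.isHyperconvex_fixedPoints (hX : IsHyperconvex X) (hT : LipschitzWith 1 T)
    (hne : (fixedPoints T).Nonempty) : IsHyperconvex (fixedPoints T) := by
  intro S hS
  rcases S.eq_empty_or_nonempty with rfl | ⟨p₀, hp₀⟩
  · obtain ⟨q, hq⟩ := hne
    exact ⟨⟨q, hq⟩, by simp⟩
  let A : Set X := ⋂ p : S, closedBall p.1.1 p.1.2
  have hA : IsInvariantAdmissible T A :=
    { isAdmissible := isAdmissible_iInter fun _ ↦ isAdmissible_closedBall _ _
      nonempty := by
        obtain ⟨z, hz⟩ := hX.exists_forall_dist_le (fun p : S ↦ (p.1.1 : X)) (fun p ↦ p.1.2)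
          fun p q ↦ hS p p.2 q q.2
        exact ⟨z, mem_iInter.2 hz⟩
      isBounded := isBounded_closedBall.subset (iInter_subset _ (⟨p₀, hp₀⟩ : S))
      mapsTo := fun x hx ↦ mem_iInter.2 fun p ↦ by
        -- The centre of each ball is fixed by `T`.
        have hTx := hT.dist_le_mul_of_le (mem_iInter.1 hx p)
        rwa [p.1.1.2.eq, NNReal.coe_one, one_mul] at hTx }
  obtain ⟨z, hz, hTz⟩ := hX.exists_isFixedPt hT.lipschitzOnWith hA
  exact ⟨⟨z, hTz⟩, fun p hp ↦ mem_iInter.1 hz ⟨p, hp⟩⟩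

theorem IsHyperconvex.isInjectiveMetricSpace_iff_exists_fixedPoints_eq {X : Type u} [MetricSpace X]
    (hX : IsHyperconvex X) {Q : Set X} (hQ : Q.Nonempty) :
    IsInjectiveMetricSpace.{u, u, u} Q ↔ ∃ T : X → X, LipschitzWith 1 T ∧ fixedPoints T = Q := by
  refine ⟨fun h ↦ h.exists_lipschitzWith_fixedPoints_eq, ?_⟩
  rintro ⟨T, hT, rfl⟩
  exact (hX.isHyperconvex_fixedPoints hT hQ).isInjectiveMetricSpace

end Baillon

section Multimap

variable {Y : Type*} [PseudoMetricSpace Y] {F : Y → Set ℝ}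

/-- A set-valued map is nonexpansive if every point of `F y` is within `dist y y'` of some point of
`F y'`, i.e. `F` is `1`-Lipschitz for the Hausdorff distance, with the distance attained. -/
def IsNonexpansiveMultimap (F : Y → Set ℝ) : Prop :=
  ∀ y y', ∀ t ∈ F y, ∃ t' ∈ F y', dist t t' ≤ dist y y'

namespace IsNonexpansiveMultimap

theorem nonempty (hF : IsNonexpansiveMultimap F) {y : Y} (h : (F y).Nonempty) (y' : Y) :
    (F y').Nonempty :=
  let ⟨t, ht⟩ := h
  let ⟨t', ht', _⟩ := hF y y' t ht
  ⟨t', ht'⟩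

theorem bddBelow (hF : IsNonexpansiveMultimap F) {y : Y} (h : BddBelow (F y)) (y' : Y) :
    BddBelow (F y') := by
  obtain ⟨b, hb⟩ := h
  refine ⟨b - dist y' y, fun t ht ↦ ?_⟩
  obtain ⟨t', ht', htt'⟩ := hF y' y t ht
  linarith [hb ht', (abs_le.1 htt').1]

theorem bddAbove (hF : IsNonexpansiveMultimap F) {y : Y} (h : BddAbove (F y)) (y' : Y) :
    BddAbove (F y') := by
  obtain ⟨b, hb⟩ := h
  refine ⟨b + dist y' y, fun t ht ↦ ?_⟩
  obtain ⟨t', ht', htt'⟩ := hF y' y t ht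
  linarith [hb ht', (abs_le.1 htt').2]

theorem lipschitzWith_sInf (hF : IsNonexpansiveMultimap F) (hne : ∀ y, (F y).Nonempty)
    (hb : ∀ y, BddBelow (F y)) : LipschitzWith 1 fun y ↦ sInf (F y) := by
  refine LipschitzWith.of_le_add fun y y' ↦ ?_
  rw [← sub_le_iff_le_add]
  refine le_csInf (hne y') fun t ht ↦ ?_
  obtain ⟨t', ht', htt'⟩ := hF y' y t ht
  rw [dist_comm y' y] at htt'
  linarith [csInf_le (hb y) ht', (abs_le.1 htt').1]

theorem lipschitzWith_sSup (hF : IsNonexpansiveMultimap F) (hne : ∀ y, (F y).Nonempty)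
    (hb : ∀ y, BddAbove (F y)) : LipschitzWith 1 fun y ↦ sSup (F y) := by
  refine LipschitzWith.of_le_add fun y y' ↦ csSup_le (hne y) fun t ht ↦ ?_
  obtain ⟨t', ht', htt'⟩ := hF y y' t ht
  linarith [le_csSup (hb y') ht', (abs_le.1 htt').2]

end IsNonexpansiveMultimap

theorem isNonexpansiveMultimap_fixedPoints {φ : Y × ℝ → ℝ} (hφ : LipschitzWith 1 φ) :
    IsNonexpansiveMultimap fun y ↦ fixedPoints fun t ↦ φ (y, t) := by
  intro y y' t ht
  have hmaps :
      MapsTo (fun s ↦ φ (y', s)) (closedBall t (dist y y')) (closedBall t (dist y y')) := by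
    intro s hs
    have hdist : dist (y', s) (y, t) ≤ dist y y' := max_le (dist_comm y' y).le hs
    have hφdist := hφ.dist_le_mul_of_le hdist
    rwa [show φ (y, t) = t from ht, NNReal.coe_one, one_mul] at hφdist
  have hcont : Continuous fun s ↦ φ (y', s) := hφ.continuous.comp (by fun_prop)
  rw [Real.closedBall_eq_Icc] at hmaps
  obtain ⟨s, hs, hfix⟩ := exists_mem_Icc_isFixedPt_of_mapsTo hcont.continuousOn
    (by linarith [dist_nonneg (x := y) (y := y')]) hmaps
  rw [← Real.closedBall_eq_Icc] at hs
  exact ⟨s, hfix, mem_closedBall'.1 hs⟩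

theorem ordConnected_fixedPoints {f : ℝ → ℝ} (hf : LipschitzWith 1 f) :
    (fixedPoints f).OrdConnected := by
  refine ⟨fun s hs r hr t ht ↦ le_antisymm ?_ ?_⟩
  · have hst := hf.le_add_mul t s
    rw [hs.eq, NNReal.coe_one, one_mul, Real.dist_eq, abs_of_nonneg (sub_nonneg.2 ht.1)] at hst
    linarith
  · have htr := hf.le_add_mul r t
    rw [hr.eq, NNReal.coe_one, one_mul, Real.dist_eq, abs_of_nonneg (sub_nonneg.2 ht.2)] at htr
    linarith

theorem mem_iff_sInf_le_and_le_sSup {α : Type*} [ConditionallyCompleteLinearOrder α]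
    [TopologicalSpace α] [OrderTopology α] {s : Set α} (hne : s.Nonempty) (hcl : IsClosed s)
    (hs : s.OrdConnected) {t : α} :
    t ∈ s ↔ (BddBelow s → sInf s ≤ t) ∧ (BddAbove s → t ≤ sSup s) := by
  refine ⟨fun ht ↦ ⟨fun hb ↦ csInf_le hb ht, fun hb ↦ le_csSup hb ht⟩, fun ⟨hlower, hupper⟩ ↦ ?_⟩
  obtain ⟨a, ha, hat⟩ : ∃ a ∈ s, a ≤ t := by
    by_cases hb : BddBelow s
    · exact ⟨sInf s, hcl.csInf_mem hne hb, hlower hb⟩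
    · exact (not_bddBelow_iff.1 hb t).imp fun _ ⟨ha, hat⟩ ↦ ⟨ha, hat.le⟩
  obtain ⟨b, hb, htb⟩ : ∃ b ∈ s, t ≤ b := by
    by_cases hb : BddAbove s
    · exact ⟨sSup s, hcl.csSup_mem hne hb, hupper hb⟩
    · exact (not_bddAbove_iff.1 hb t).imp fun _ ⟨hb, htb⟩ ↦ ⟨hb, htb.le⟩
  exact hs.out ha hb ⟨hat, htb⟩

end Multimap

section Coordinates

open scoped ENNReal lp

variable {I : Type*}

theorem lipschitzWith_dropCoord (i : I) : LipschitzWith 1 (dropCoord i) :=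
  (LipschitzWith.coordinate 1).2 fun j ↦ lp.lipschitzWith_one_eval ∞ j.1

open Classical in
/-- The inverse of `x ↦ (dropCoord i x, x i)`: inserts `p.2` as the `i`-th coordinate into `p.1`. -/
noncomputable def insertCoord (i : I) (p : ℓ^∞({j : I // j ≠ i}, ℝ) × ℝ) : ℓ^∞(I, ℝ) :=
  ⟨fun j ↦ if h : j = i then p.2 else p.1 ⟨j, h⟩, memℓp_infty ⟨max |p.2| ‖p.1‖, by
    rintro _ ⟨j, rfl⟩
    dsimp only
    split_ifs with h
    · exact le_max_left _ _
    · exact (lp.norm_apply_le_norm ENNReal.top_ne_zero p.1 _).trans (le_max_right _ _)⟩⟩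

theorem insertCoord_dropCoord (i : I) (x : ℓ^∞(I, ℝ)) :
    insertCoord i (dropCoord i x, x i) = x := by
  ext j
  by_cases h : j = i
  · simp [insertCoord, h]
  · simp [insertCoord, dropCoord, h]

theorem lipschitzWith_insertCoord (i : I) : LipschitzWith 1 (insertCoord i) := by
  refine (LipschitzWith.coordinate 1).2 fun j ↦ ?_
  by_cases h : j = i
  · simpa only [insertCoord, h, dite_true] using LipschitzWith.prod_snd
  · simpa only [insertCoord, h, dite_false, mul_one, comp_def] using
      (lp.lipschitzWith_one_eval ∞ (⟨j, h⟩ : {j : I // j ≠ i})).comp LipschitzWith.prod_fst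

/-- The subset of `l_∞(I)` cut out by the lower bounds `rlo i` for `i ∈ L` and the upper bounds
`rhi i` for `i ∈ U`. -/
def constraintSet (L U : Set I) (rlo rhi : (i : I) → ℓ^∞({j : I // j ≠ i}, ℝ) → ℝ) :
    Set ℓ^∞(I, ℝ) :=
  {x | (∀ i ∈ L, rlo i (dropCoord i x) ≤ x i) ∧ (∀ i ∈ U, x i ≤ rhi i (dropCoord i x))}

section Clamp

variable {L U : Set I} {rlo rhi : (i : I) → ℓ^∞({j : I // j ≠ i}, ℝ) → ℝ}

open Classical in
/-- The `i`-th coordinate of `x`, clamped between the bounds that are imposed on it. -/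
noncomputable def clampCoord (L U : Set I) (rlo rhi : (i : I) → ℓ^∞({j : I // j ≠ i}, ℝ) → ℝ)
    (i : I) (x : ℓ^∞(I, ℝ)) : ℝ :=
  let t := if i ∈ U then min (x i) (rhi i (dropCoord i x)) else x i
  if i ∈ L then max (rlo i (dropCoord i x)) t else t

theorem lipschitzWith_clampCoord {i : I} (hL : i ∈ L → LipschitzWith 1 (rlo i))
    (hU : i ∈ U → LipschitzWith 1 (rhi i)) : LipschitzWith 1 (clampCoord L U rlo rhi i) := by
  have hcoord : LipschitzWith 1 fun x : ℓ^∞(I, ℝ) ↦ x i := lp.lipschitzWith_one_eval ∞ i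
  have hlo (h : i ∈ L) : LipschitzWith 1 fun x ↦ rlo i (dropCoord i x) := by
    simpa only [mul_one, comp_def] using (hL h).comp (lipschitzWith_dropCoord i)
  have hhi (h : i ∈ U) : LipschitzWith 1 fun x ↦ rhi i (dropCoord i x) := by
    simpa only [mul_one, comp_def] using (hU h).comp (lipschitzWith_dropCoord i)
  unfold clampCoord
  by_cases hiL : i ∈ L <;> by_cases hiU : i ∈ U <;> simp only [hiL, hiU, if_true, if_false]
  · simpa only [max_self] using (hlo hiL).max (hcoord.min (hhi hiU))
  · simpa only [max_self] using (hlo hiL).max hcoord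
  · simpa only [max_self] using hcoord.min (hhi hiU)
  · exact hcoord

theorem clampCoord_eq_iff {i : I} {x : ℓ^∞(I, ℝ)}
    (h : i ∈ L ∩ U → rlo i (dropCoord i x) ≤ rhi i (dropCoord i x)) :
    clampCoord L U rlo rhi i x = x i ↔
      (i ∈ L → rlo i (dropCoord i x) ≤ x i) ∧ (i ∈ U → x i ≤ rhi i (dropCoord i x)) := by
  unfold clampCoord
  by_cases hL : i ∈ L <;> by_cases hU : i ∈ U
  · have hle := h ⟨hL, hU⟩
    grind
  all_goals simp [hL, hU]

theorem exists_lipschitzWith_fixedPoints_eq_constraintSet (hL : ∀ i ∈ L, LipschitzWith 1 (rlo i))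
    (hU : ∀ i ∈ U, LipschitzWith 1 (rhi i)) (hLU : ∀ i ∈ L ∩ U, ∀ y, rlo i y ≤ rhi i y)
    (hne : (constraintSet L U rlo rhi).Nonempty) :
    ∃ T : ℓ^∞(I, ℝ) → ℓ^∞(I, ℝ),
      LipschitzWith 1 T ∧ fixedPoints T = constraintSet L U rlo rhi := by
  have hclamp (i : I) : LipschitzWith 1 (clampCoord L U rlo rhi i) :=
    lipschitzWith_clampCoord (hL i) (hU i)
  have hfix (x : ℓ^∞(I, ℝ)) :
      (∀ i, clampCoord L U rlo rhi i x = x i) ↔ x ∈ constraintSet L U rlo rhi := by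
    simp only [clampCoord_eq_iff fun h ↦ hLU _ h _, forall_and]
    rfl
  -- Clamping preserves boundedness because it is `1`-Lipschitz and fixes a point.
  obtain ⟨q, hq⟩ := hne
  have hmem (x : ℓ^∞(I, ℝ)) : Memℓp (fun i ↦ clampCoord L U rlo rhi i x) ∞ :=
    LipschitzWith.uniformly_bounded (fun x i ↦ clampCoord L U rlo rhi i x) hclamp q
      (by simpa only [(hfix q).2 hq] using lp.memℓp q) x
  refine ⟨fun x ↦ ⟨_, hmem x⟩, (LipschitzWith.coordinate 1).2 hclamp, ?_⟩
  ext x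
  rw [← hfix, mem_fixedPoints, IsFixedPt, lp.ext_iff, funext_iff]

end Clamp

section Slice

variable {ρ : ℓ^∞(I, ℝ) → ℓ^∞(I, ℝ)}

/-- The values `t` of the `i`-th coordinate that `ρ` leaves unchanged when the remaining
coordinates are given by `y`. -/
def coordSlice (ρ : ℓ^∞(I, ℝ) → ℓ^∞(I, ℝ)) (i : I) (y : ℓ^∞({j : I // j ≠ i}, ℝ)) : Set ℝ :=
  fixedPoints fun t ↦ ρ (insertCoord i (y, t)) i

theorem mem_fixedPoints_iff_forall_mem_coordSlice {x : ℓ^∞(I, ℝ)} :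
    x ∈ fixedPoints ρ ↔ ∀ i, x i ∈ coordSlice ρ i (dropCoord i x) := by
  simp only [coordSlice, mem_fixedPoints, IsFixedPt, insertCoord_dropCoord, lp.ext_iff, funext_iff]

theorem lipschitzWith_apply_insertCoord (hρ : LipschitzWith 1 ρ) (i : I) :
    LipschitzWith 1 fun p ↦ ρ (insertCoord i p) i := by
  simpa only [mul_one, comp_def] using
    (lp.lipschitzWith_one_eval ∞ i).comp (hρ.comp (lipschitzWith_insertCoord i))

theorem isNonexpansiveMultimap_coordSlice (hρ : LipschitzWith 1 ρ) (i : I) :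
    IsNonexpansiveMultimap (coordSlice ρ i) :=
  isNonexpansiveMultimap_fixedPoints (lipschitzWith_apply_insertCoord hρ i)

theorem mem_coordSlice_iff (hρ : LipschitzWith 1 ρ) {i : I} {y : ℓ^∞({j : I // j ≠ i}, ℝ)}
    (hne : (coordSlice ρ i y).Nonempty) {t : ℝ} :
    t ∈ coordSlice ρ i y ↔ (BddBelow (coordSlice ρ i y) → sInf (coordSlice ρ i y) ≤ t) ∧
      (BddAbove (coordSlice ρ i y) → t ≤ sSup (coordSlice ρ i y)) := by
  have hlip : LipschitzWith 1 fun t ↦ ρ (insertCoord i (y, t)) i := by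
    simpa only [mul_one, comp_def] using
      (lipschitzWith_apply_insertCoord hρ i).comp (LipschitzWith.prodMk_left y)
  exact mem_iff_sInf_le_and_le_sSup hne (isClosed_fixedPoints hlip.continuous)
    (ordConnected_fixedPoints hlip)

theorem exists_fixedPoints_eq_constraintSet (hρ : LipschitzWith 1 ρ)
    (hne : (fixedPoints ρ).Nonempty) :
    ∃ (L U : Set I) (rlo rhi : (i : I) → ℓ^∞({j : I // j ≠ i}, ℝ) → ℝ),
      (∀ i ∈ L, LipschitzWith 1 (rlo i)) ∧ (∀ i ∈ U, LipschitzWith 1 (rhi i)) ∧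
      (∀ i ∈ L ∩ U, ∀ y, rlo i y ≤ rhi i y) ∧ fixedPoints ρ = constraintSet L U rlo rhi := by
  obtain ⟨q, hq⟩ := hne
  have hF := isNonexpansiveMultimap_coordSlice hρ
  have hslice (i : I) : ∀ y, (coordSlice ρ i y).Nonempty :=
    (hF i).nonempty ⟨q i, mem_fixedPoints_iff_forall_mem_coordSlice.1 hq i⟩
  refine ⟨{i | ∀ y, BddBelow (coordSlice ρ i y)}, {i | ∀ y, BddAbove (coordSlice ρ i y)},
    fun i y ↦ sInf (coordSlice ρ i y), fun i y ↦ sSup (coordSlice ρ i y),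
    fun i hi ↦ (hF i).lipschitzWith_sInf (hslice i) hi,
    fun i hi ↦ (hF i).lipschitzWith_sSup (hslice i) hi,
    fun i hi y ↦ csInf_le_csSup (hslice i y) (hi.1 y) (hi.2 y), ?_⟩
  have hbelow (i : I) (y) : BddBelow (coordSlice ρ i y) ↔ ∀ y', BddBelow (coordSlice ρ i y') :=
    ⟨(hF i).bddBelow, fun h ↦ h y⟩
  have habove (i : I) (y) : BddAbove (coordSlice ρ i y) ↔ ∀ y', BddAbove (coordSlice ρ i y') :=
    ⟨(hF i).bddAbove, fun h ↦ h y⟩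
  ext x
  rw [mem_fixedPoints_iff_forall_mem_coordSlice]
  simp_rw [mem_coordSlice_iff hρ (hslice _ _), hbelow _ (dropCoord _ x), habove _ (dropCoord _ x),
    forall_and]
  rfl

end Slice

end Coordinates

/-- A non-empty subset `Q` of `l_∞(I)` is injective (with the induced metric) if and only
if it is cut out by a family of inequalities `r̲_i(π̂_i x) ≤ x_i ≤ r̄_i(π̂_i x)` given by
`1`-Lipschitz functions, where lower bounds are imposed for `i ∈ L` and upper bounds for
`i ∈ U`, and `r̲_i ≤ r̄_i` whenever both are imposed. -/
theorem injective_subset_linf_iff {I : Type u}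
    (Q : Set (lp (fun _ : I => ℝ) ⊤)) (hQ : Q.Nonempty) :
    IsInjectiveMetricSpace.{u, u, u} Q ↔
      ∃ (L U : Set I)
        (rlo rhi : (i : I) → (lp (fun _ : {j : I // j ≠ i} => ℝ) ⊤ → ℝ)),
        (∀ i ∈ L, LipschitzWith 1 (rlo i)) ∧
        (∀ i ∈ U, LipschitzWith 1 (rhi i)) ∧
        (∀ i ∈ L ∩ U, ∀ y, rlo i y ≤ rhi i y) ∧
        Q = {x | (∀ i ∈ L, rlo i (dropCoord i x) ≤ x i) ∧
                 (∀ i ∈ U, x i ≤ rhi i (dropCoord i x))} := by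
  rw [(isHyperconvex_linf I).isInjectiveMetricSpace_iff_exists_fixedPoints_eq hQ]
  constructor
  · rintro ⟨ρ, hρ, rfl⟩
    exact exists_fixedPoints_eq_constraintSet hρ hQ
  · rintro ⟨L, U, rlo, rhi, hL, hU, hLU, rfl⟩
    exact exists_lipschitzWith_fixedPoints_eq_constraintSet hL hU hLU hQ
end

section
/- Let I be a set and let V be a linear subspace of l_∞(I) of codimension one. If there exists i ∈ I such that V ∩ ( Int(C_i) ∪ Int(−C_i) ) = ∅, where Int(C_i) = { x ∈ l_∞(I) : x_i > sup_{j∈I∖{i}} |x_j| } and Int(−C_i) = { x ∈ l_∞(I) : −x_i > sup_{j∈I∖{i}} |x_j| }, then V is injective as a metric space with the induced metric. -/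
universe u v w

/-!
The space `ℓ^∞(I)` is injective by coordinatewise McShane extension, and a 1-Lipschitz retract of an
injective space is injective. The retraction is the linear projection onto `V` along the basis
vector `e_i`: since `|x i| ≤ sup_{j ≠ i} |x j|` for `x ∈ V`, the norm of a vector of `V` does not
see the coordinate `i`, which is the only one that the projection changes.
-/

theorem IsInjectiveMetricSpace.of_leftInverse {X Y : Type*} [MetricSpace X] [MetricSpace Y]
    (hX : IsInjectiveMetricSpace.{_, v, w} X) {r : X → Y} {s : Y → X} (hr : LipschitzWith 1 r)
    (hs : LipschitzWith 1 s) (hrs : Function.LeftInverse r s) :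
    IsInjectiveMetricSpace.{_, v, w} Y := by
  intro A B _ _ ι hι f hf
  obtain ⟨g, hg, hgι⟩ := hX ι hι (s ∘ f) (by simpa only [mul_one] using hs.comp hf)
  refine ⟨r ∘ g, by simpa only [mul_one] using hr.comp hg, fun a => ?_⟩
  rw [Function.comp_apply, hgι, Function.comp_apply, hrs]

theorem isInjectiveMetricSpace_lp_infty (I : Type*) :
    IsInjectiveMetricSpace.{_, v, w} (lp (fun _ : I => ℝ) ⊤) := by
  intro A B _ _ ι hι f hf
  have hextend (a : A) : Function.extend ι f 0 (ι a) = f a := hι.injective.extend_apply f 0 a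
  have hLip : LipschitzOnWith 1 (Function.extend ι f 0) (Set.range ι) := by
    rintro _ ⟨a, rfl⟩ _ ⟨b, rfl⟩
    rw [hextend, hextend, hι a b]
    exact hf a b
  obtain ⟨g, hg, hfg⟩ := hLip.extend_lp_infty
  exact ⟨g, hg, fun a => (hfg ⟨a, rfl⟩).symm.trans (hextend a)⟩

theorem lipschitzWith_one_projectionOnto {R E : Type*} [Ring R] [SeminormedAddCommGroup E]
    [Module R E] {V W : Submodule R E} (hVW : IsCompl V W)
    (hnorm : ∀ x ∈ V, ∀ y ∈ W, ‖x‖ ≤ ‖x + y‖) : LipschitzWith 1 (V.projectionOnto W hVW) := by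
  have hcontr (x : E) : ‖V.projectionOnto W hVW x‖ ≤ ‖x‖ :=
    calc ‖V.projection W hVW x‖
      _ ≤ ‖V.projection W hVW x + W.projection V hVW.symm x‖ :=
        hnorm _ (Submodule.projection_apply_mem hVW x) _
          (Submodule.projection_apply_mem hVW.symm x)
      _ = ‖x‖ := by rw [Submodule.projection_add_projection_eq_self]
  refine LipschitzWith.of_dist_le_mul fun x y => ?_
  rw [dist_eq_norm, dist_eq_norm, ← map_sub, NNReal.coe_one, one_mul]
  exact hcontr (x - y)

theorem IsInjectiveMetricSpace.submodule_of_isCompl {R E : Type*} [Ring R] [NormedAddCommGroup E]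
    [Module R E] (hE : IsInjectiveMetricSpace.{_, v, w} E) {V W : Submodule R E}
    (hVW : IsCompl V W) (hnorm : ∀ x ∈ V, ∀ y ∈ W, ‖x‖ ≤ ‖x + y‖) :
    IsInjectiveMetricSpace.{_, v, w} V :=
  hE.of_leftInverse (lipschitzWith_one_projectionOnto hVW hnorm) (LipschitzWith.subtype_val _)
    (Submodule.projectionOnto_apply_left hVW)

theorem isCoatom_of_finrank_quotient_eq_one {K E : Type*} [DivisionRing K] [AddCommGroup E]
    [Module K E] {V : Submodule K E} (hV : Module.finrank K (E ⧸ V) = 1) : IsCoatom V :=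
  isSimpleModule_iff_isCoatom.mp <|
    (isSimpleModule_iff K _).mpr (is_simple_module_of_finrank_eq_one hV)

theorem lp_infty_norm_le_norm_of_forall_ne {I : Type*} {E : I → Type*}
    [∀ i, NormedAddCommGroup (E i)] {i : I} {x y : lp E ⊤}
    (hx : ‖x i‖ ≤ ⨆ j : {j : I // j ≠ i}, ‖x j.1‖) (hxy : ∀ j ≠ i, ‖x j‖ ≤ ‖y j‖) :
    ‖x‖ ≤ ‖y‖ := by
  have hle (j : I) (hj : j ≠ i) : ‖x j‖ ≤ ‖y‖ :=
    (hxy j hj).trans (lp.norm_apply_le_norm ENNReal.top_ne_zero y j)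
  refine lp.norm_le_of_forall_le (norm_nonneg y) fun j => ?_
  obtain rfl | hj := eq_or_ne j i
  · exact hx.trans (Real.iSup_le (fun k => hle k.1 k.2) (norm_nonneg y))
  · exact hle j hj

theorem lp_infty_norm_le_norm_add_single {I : Type*} [DecidableEq I] {E : I → Type*}
    [∀ i, NormedAddCommGroup (E i)] {i : I} {x : lp E ⊤}
    (hx : ‖x i‖ ≤ ⨆ j : {j : I // j ≠ i}, ‖x j.1‖) (a : E i) : ‖x‖ ≤ ‖x + lp.single ⊤ i a‖ :=
  lp_infty_norm_le_norm_of_forall_ne hx fun j hj => by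
    rw [lp.coeFn_add, Pi.add_apply, lp.single_apply_ne ⊤ i a hj, add_zero]

/-- If a codimension-one linear subspace `V` of `l_∞(I)` avoids, for some coordinate
`i ∈ I`, the interiors of the cones `C_i` and `-C_i`, where
`Int(C_i) = {x : x_i > sup_{j ≠ i} |x_j|}` and `Int(-C_i) = {x : -x_i > sup_{j ≠ i} |x_j|}`,
then `V` is injective with the induced metric. -/
theorem injective_codim_one_of_exists_coord {I : Type u}
    (V : Submodule ℝ (lp (fun _ : I => ℝ) ⊤))
    (hcodim : Module.finrank ℝ ((lp (fun _ : I => ℝ) ⊤) ⧸ V) = 1)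
    (hcone : ∃ i : I, (V : Set (lp (fun _ : I => ℝ) ⊤)) ∩
      ({x | (⨆ j : {j : I // j ≠ i}, |x j.1|) < x i} ∪
        {x | (⨆ j : {j : I // j ≠ i}, |x j.1|) < -x i}) = ∅) :
    IsInjectiveMetricSpace.{u, v, w} V := by
  classical
  obtain ⟨i, hi⟩ := hcone
  have hcoord : ∀ x ∈ V, ‖x i‖ ≤ ⨆ j : {j : I // j ≠ i}, ‖x j.1‖ := fun x hx =>
    abs_le'.mpr ⟨not_lt.mp fun hlt => hi.subset ⟨hx, .inl hlt⟩,
      not_lt.mp fun hlt => hi.subset ⟨hx, .inr hlt⟩⟩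
  let e : lp (fun _ : I => ℝ) ⊤ := lp.single ⊤ i 1
  have he : e ∉ V := fun heV => by
    have hle : ‖e‖ ≤ ‖e + lp.single ⊤ i (-1)‖ := lp_infty_norm_le_norm_add_single (hcoord e heV) _
    rw [lp.single_neg, add_neg_cancel, norm_zero, lp.norm_single ENNReal.zero_lt_top,
      norm_one] at hle
    exact one_pos.not_ge hle
  have hcompl : IsCompl V (ℝ ∙ e) :=
    Submodule.isCompl_span_singleton_of_isCoatom_of_notMem
      (isCoatom_of_finrank_quotient_eq_one hcodim) he
  refine (isInjectiveMetricSpace_lp_infty I).submodule_of_isCompl hcompl fun x hx y hy => ?_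
  obtain ⟨t, rfl⟩ := Submodule.mem_span_singleton.mp hy
  rw [← lp.single_smul]
  exact lp_infty_norm_le_norm_add_single (hcoord x hx) _
end
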